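/- Let t ≥ 3 be an odd square-free integer. For every prime q with q ≡ 1 (mod 4), the integer t divides the class number of the imaginary bi-quadratic field ℚ(√(1 − 2q^t), √q), and the collection of such bi-quadratic fields (as q ranges over primes congruent to 1 mod 4) is infinite. In particular, there exist infinitely many imaginary bi-quadratic fields whose class number is divisible by t. -/

import Mathlib

open Polynomial NumberField

/-- A fixed choice of complex square root of the integer `d`. -/
noncomputable def sqrtC (d : ℤ) : ℂ := (d : ℂ) ^ ((1 : ℂ) / 2)

lemma sqrtC_sq (d : ℤ) : sqrtC d ^ 2 = (d : ℂ) := by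
  unfold sqrtC
  rcases eq_or_ne (d : ℂ) 0 with h | h
  · rw [h, Complex.zero_cpow (by norm_num : (1 : ℂ) / 2 ≠ 0)]
    simp
  · rw [pow_two, ← Complex.cpow_add _ _ h]
    norm_num

lemma isIntegral_sqrtC (d : ℤ) : IsIntegral ℚ (sqrtC d) := by
  refine ⟨X ^ 2 - C (d : ℚ), monic_X_pow_sub_C _ two_ne_zero, ?_⟩
  have : (Polynomial.aeval (sqrtC d)) (X ^ 2 - C (d : ℚ)) = 0 := by
    simp [sqrtC_sq]
  simpa [Polynomial.aeval_def] using this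

/-- The (number) field `ℚ(√d)`, realized as a subfield of `ℂ`. -/
noncomputable def Qsqrt (d : ℤ) : IntermediateField ℚ ℂ :=
  IntermediateField.adjoin ℚ {sqrtC d}

instance (d : ℤ) : FiniteDimensional ℚ (Qsqrt d) :=
  IntermediateField.adjoin.finiteDimensional (isIntegral_sqrtC d)

instance (d : ℤ) : NumberField (Qsqrt d) := ⟨⟩

/-- The imaginary bi-quadratic field `ℚ(√d, √e)`, realized as a subfield of `ℂ`. -/
noncomputable def Qsqrt2 (d e : ℤ) : IntermediateField ℚ ℂ :=
  IntermediateField.adjoin ℚ {sqrtC d, sqrtC e}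

instance (d e : ℤ) : FiniteDimensional ℚ (Qsqrt2 d e) := by
  have : Finite ({sqrtC d, sqrtC e} : Set ℂ) :=
    Set.Finite.ofFinset {sqrtC d, sqrtC e} (by simp)
  exact IntermediateField.finiteDimensional_adjoin (fun x hx => by
    rcases hx with h | h
    · exact h ▸ isIntegral_sqrtC d
    · exact (Set.mem_singleton_iff.mp h) ▸ isIntegral_sqrtC e)

instance (d e : ℤ) : NumberField (Qsqrt2 d e) := ⟨⟩


lemma aux_pow_expand {R : Type*} [CommRing R] (W : R) (b : ℕ) :
    ∃ z, (1 - W) ^ b = 1 - b * W + W ^ 2 * z := by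
  induction b with
  | zero => exact ⟨0, by simp⟩
  | succ n ih =>
    obtain ⟨z, hz⟩ := ih
    refine ⟨n + z * (1 - W), ?_⟩
    rw [pow_succ, hz]; push_cast; ring

lemma aux_pow_two {R : Type*} [CommRing R] (W N z0 : R) (hW : W ^ 2 = 8 * N ^ 2 * z0)
    (a b : ℕ) :
    ∃ z, (1 - W) ^ (2 ^ a * b) = 1 - (2 ^ a * b) * W + 4 * 2 ^ a * N ^ 2 * z := by
  induction a with
  | zero =>
    obtain ⟨z, hz⟩ := aux_pow_expand W b
    exact ⟨2 * z0 * z, by rw [pow_zero, one_mul, hz, hW]; ring⟩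
  | succ n ih =>
    obtain ⟨z, hz⟩ := ih
    refine ⟨2 ^ n * b ^ 2 * z0 + z - 2 ^ n * b * W * z + 2 * 2 ^ n * N ^ 2 * z ^ 2, ?_⟩
    have : 2 ^ (n + 1) * b = (2 ^ n * b) * 2 := by ring
    rw [this, pow_mul, hz]
    have : (1 - 2 ^ n * (b : R) * W + 4 * 2 ^ n * N ^ 2 * z) ^ 2 =
      1 + (2 ^ n * (b : R)) ^ 2 * W ^ 2 + 16 * (2 ^ n) ^ 2 * (N ^ 2) ^ 2 * z ^ 2 -
       2 * (2 ^ n * (b : R) * W) + 2 * (4 * 2 ^ n * N ^ 2 * z)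
       - 2 * (2 ^ n * (b : R) * W) * (4 * 2 ^ n * N ^ 2 * z) := by ring
    rw [this, hW]; ring

lemma claimA_core (d v n : ℤ) (h : d * v ^ 2 = -1 - 8 * n) (hn : n ≠ 0) (m : ℕ) (hm : 1 ≤ m)
    (e : ℤ) (he : e = 1 ∨ e = -1) :
    (((⟨-4 * n, v⟩ : ℤ√d) ^ m) * ⟨1, v⟩).re ≠ e := by
  intro H
  have hsq : (⟨-4 * n, v⟩ : ℤ√d) ^ 2 =
      -(1 - (8 : ℤ√d) * n * ⟨2 * n - 1, -v⟩) := by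
    rw [pow_two]
    ext
    · simp [Zsqrtd.re_mul]; linear_combination h
    · simp [Zsqrtd.im_mul]; ring
  set y : ℤ√d := ⟨2 * n - 1, -v⟩ with hy
  have hy2 : y ^ 2 = 2 * ⟨2 * n ^ 2 - 6 * n, v - 2 * n * v⟩ := by
    rw [pow_two]
    ext
    · simp [hy, Zsqrtd.re_mul]; linear_combination h
    · simp [hy, Zsqrtd.im_mul]; ring
  rcases Nat.even_or_odd' m with ⟨k, rfl | rfl⟩
  · have hk : k ≠ 0 := by omega
    obtain ⟨a, b, hb, rfl⟩ := Nat.exists_eq_two_pow_mul_odd hk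
    obtain ⟨z, hz⟩ := aux_pow_two ((8 : ℤ√d) * n * y) (4 * n)
      ⟨2 * n ^ 2 - 6 * n, v - 2 * n * v⟩ (by rw [mul_pow, hy2]; ring) a b
    rw [pow_mul, hsq, neg_pow, hz] at H
    have e1 : ((-1 : ℤ√d) ^ (2 ^ a * b)) = ((((-1 : ℤ) ^ (2 ^ a * b)) : ℤ) : ℤ√d) := by
      push_cast; rfl
    have e2 : (1 - (2 ^ a * (b : ℤ√d)) * (8 * n * y) + 4 * 2 ^ a * (4 * n) ^ 2 * z) * ⟨1, v⟩ =
      ⟨1, v⟩ - ((2 ^ a * b * 8 * n : ℤ) : ℤ√d) * (y * ⟨1, v⟩)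
        + ((64 * 2 ^ a * n ^ 2 : ℤ) : ℤ√d) * (z * ⟨1, v⟩) := by
      push_cast; ring
    have e3 : (y * ⟨1, v⟩).re = 10 * n := by
      simp [hy, Zsqrtd.re_mul]; linear_combination -h
    rw [e1, mul_assoc, e2, Zsqrtd.re_smul] at H
    simp only [Zsqrtd.re_add, Zsqrtd.re_sub, Zsqrtd.re_smul, e3] at H
    set Z := (z * ⟨1, v⟩).re
    have h2 : (2 ^ a * b * 8 * n * (10 * n) : ℤ) = 64 * 2 ^ a * n ^ 2 * Z := by
      have hX : ∃ X : ℤ, (1 - 2 ^ a * b * 8 * n * (10 * n) + 64 * 2 ^ a * n ^ 2 * Z : ℤ) = 1 + 8 * X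
          := ⟨- 2 ^ a * b * n * (10 * n) + 8 * 2 ^ a * n ^ 2 * Z, by ring⟩
      obtain ⟨X, hX⟩ := hX
      rw [hX] at H
      rcases neg_one_pow_eq_or ℤ (2 ^ a * b) with h1 | h1 <;> rw [h1] at H <;>
      rcases he with rfl | rfl <;> first
        | omega
        | (obtain rfl : X = 0 := by omega
           linarith)
    have h3 : (16 * 2 ^ a * n ^ 2 : ℤ) * (5 * b) = (16 * 2 ^ a * n ^ 2) * (4 * Z) := by
      linear_combination h2
    have h4 := mul_left_cancel₀ (by positivity) h3
    obtain ⟨c, rfl⟩ := hb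
    push_cast at h4
    omega
  · obtain ⟨z, hz⟩ := aux_pow_expand ((8 : ℤ√d) * n * y) k
    rw [pow_succ, pow_mul, hsq, neg_pow, hz] at H
    have e1 : ((-1 : ℤ√d) ^ k) = ((((-1 : ℤ) ^ k) : ℤ) : ℤ√d) := by
      push_cast; rfl
    have e2 : (-1 : ℤ√d) ^ k * (1 - k * (8 * n * y) + (8 * n * y) ^ 2 * z) * ⟨-4 * n, v⟩ * ⟨1, v⟩ =
      (((-1 : ℤ) ^ k : ℤ) : ℤ√d) * (⟨-4 * n, v⟩ * ⟨1, v⟩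
        + ((8 * n : ℤ) : ℤ√d) * ((-k * y + 8 * n * y ^ 2 * z) * (⟨-4 * n, v⟩ * ⟨1, v⟩))) := by
      push_cast; ring
    have e3 : ((⟨-4 * n, v⟩ : ℤ√d) * ⟨1, v⟩).re = -1 - 12 * n := by
      simp [Zsqrtd.re_mul]; linear_combination h
    rw [e2, Zsqrtd.re_smul, Zsqrtd.re_add, Zsqrtd.re_smul, e3] at H
    set Z := (((-k * y + 8 * n * y ^ 2 * z) * (⟨-4 * n, v⟩ * ⟨1, v⟩)) : ℤ√d).re
    have h2 : (n * (-12 + 8 * Z) : ℤ) = 0 := by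
      have hX : ∃ X : ℤ, (-1 - 12 * n + 8 * n * Z : ℤ) = -1 + 4 * X
          := ⟨- 3 * n + 2 * n * Z, by ring⟩
      obtain ⟨X, hX⟩ := hX
      rw [hX] at H
      rcases neg_one_pow_eq_or ℤ k with h1 | h1 <;> rw [h1] at H <;>
      rcases he with rfl | rfl <;> first
        | omega
        | (obtain rfl : X = 0 := by omega
           linarith)
    rcases mul_eq_zero.mp h2 with h3 | h3
    · exact hn h3
    · omega

lemma claimA (d v n : ℤ) (h : d * v ^ 2 = -1 - 8 * n) (hn : n ≠ 0) (m : ℕ) (hm : 1 ≤ m)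
    (e : ℤ) (he : e = 1 ∨ e = -1) :
    ((⟨1, v⟩ : ℤ√d) ^ (2 * m + 1)).re ≠ e * 2 ^ m := by
  intro H
  have hsq : (⟨1, v⟩ : ℤ√d) ^ 2 = ((2 : ℤ) : ℤ√d) * ⟨-4 * n, v⟩ := by
    rw [pow_two]
    ext
    · simp [Zsqrtd.re_mul]; linear_combination h
    · simp [Zsqrtd.im_mul]; ring
  rw [pow_succ, pow_mul, hsq, mul_pow, ← Int.cast_pow, mul_assoc, Zsqrtd.re_smul] at H
  refine claimA_core d v n h hn m hm e he ?_
  have : (2 : ℤ) ^ m ≠ 0 := by positivity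
  apply mul_left_cancel₀ this
  rw [H]; ring

lemma re_dvd_pow (d : ℤ) (g : ℤ√d) (m : ℕ) : g.re ∣ (g ^ (2 * m + 1)).re := by
  induction m with
  | zero => simp
  | succ n ih =>
    have : g ^ (2 * (n + 1) + 1) = g ^ (2 * n + 1) * (g * g) := by ring
    rw [this, Zsqrtd.re_mul, Zsqrtd.im_mul g g]
    apply dvd_add (ih.mul_right _)
    refine ⟨d * (g ^ (2 * n + 1)).im * (2 * g.im), by ring⟩

lemma final_zsqrtd (d f : ℤ) (q s m : ℕ) (hd : d < 0) (hq : q % 4 = 1) (hq1 : 1 < q) (hs : 1 ≤ s)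
    (hm : 1 ≤ m) (hf : d * f ^ 2 = 1 - 2 * (q : ℤ) ^ (s * (2 * m + 1)))
    (g : ℤ√d) (hg : g ^ (2 * m + 1) = ((2 ^ m : ℤ) : ℤ√d) * ⟨1, f⟩) : False := by
  have hnorm : g.norm = 2 * (q : ℤ) ^ s := by
    have h1 : (g ^ (2 * m + 1)).norm = (2 * (q : ℤ) ^ s) ^ (2 * m + 1) := by
      rw [hg, Zsqrtd.norm_mul, Zsqrtd.norm_intCast, Zsqrtd.norm_def, mul_pow, ← pow_mul]
      simp only
      linear_combination -(2 ^ m * 2 ^ m : ℤ) * hf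
    have h2 : (g ^ (2 * m + 1)).norm = g.norm ^ (2 * m + 1) := map_pow Zsqrtd.normMonoidHom g _
    rw [h2] at h1
    exact (Odd.strictMono_pow (R := ℤ) (n := 2 * m + 1) ⟨m, rfl⟩).injective h1
  obtain ⟨n, hn⟩ : ∃ n : ℤ, (q : ℤ) ^ s = 4 * n + 1 := by
    have : (q : ℤ) ^ s ≡ 1 ^ s [ZMOD 4] := Int.ModEq.pow _ (by
      show (q : ℤ) % 4 = 1 % 4
      omega)
    rw [one_pow] at this
    refine ⟨(q : ℤ) ^ s / 4, ?_⟩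
    have : (q : ℤ) ^ s % 4 = 1 := this
    omega
  have hn0 : n ≠ 0 := by
    rintro rfl
    have : (1 : ℤ) < (q : ℤ) ^ s := one_lt_pow₀ (by exact_mod_cast hq1) (by omega)
    omega
  have hnr := hnorm
  rw [Zsqrtd.norm_def, hn] at hnr
  have hdodd : Odd d := by
    have : Odd (d * f ^ 2) := by rw [hf]; exact ⟨- (q : ℤ) ^ (s * (2 * m + 1)), by ring⟩
    exact (Int.odd_mul.mp this).1
  have hu : Odd g.re := by
    by_contra hc
    rw [Int.not_odd_iff_even] at hc
    obtain ⟨c, hc⟩ := hc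
    have : Even (d * (g.im * g.im)) := by
      refine ⟨2 * c * c - (4 * n + 1), ?_⟩
      rw [hc] at hnr
      linear_combination -hnr
    have : Even g.im := by
      rcases Int.even_mul.mp this with h | h
      · exact absurd h (Int.not_even_iff_odd.mpr hdodd)
      · simpa [Int.even_mul] using h
    obtain ⟨b, hb⟩ := this
    rw [hb, hc] at hnr
    have : 2 * (c * c - d * b * b) = 4 * n + 1 := by linarith
    omega
  have hre : g.re ∣ 2 ^ m := by
    have := re_dvd_pow d g m
    rw [hg, Zsqrtd.re_smul] at this
    simpa using this
  have hunit : IsUnit g.re := by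
    have hcop : IsCoprime g.re (2 ^ m) := by
      apply IsCoprime.pow_right
      rw [Int.isCoprime_iff_gcd_eq_one]
      exact Int.isCoprime_iff_gcd_eq_one.mp (Int.isCoprime_two_right.mpr hu)
    exact hcop.isUnit_of_dvd' dvd_rfl hre
  have hpow : (g ^ (2 * m + 1)).re = 1 * 2 ^ m := by
    rw [hg, Zsqrtd.re_smul]; simp
  rcases Int.isUnit_iff.mp hunit with h | h
  · have hg' : g = ⟨1, g.im⟩ := by ext <;> simp [h]
    refine claimA d g.im n ?_ hn0 m hm 1 (Or.inl rfl) ?_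
    · rw [h] at hnr; linarith
    · rw [← hg', hpow]
  · have hg' : -g = ⟨1, -g.im⟩ := by ext <;> simp [h]
    refine claimA d (-g.im) n ?_ hn0 m hm (-1) (Or.inr rfl) ?_
    · rw [h] at hnr; linarith
    · rw [← hg', Odd.neg_pow ⟨m, rfl⟩, Zsqrtd.re_neg, hpow]; ring

/-- transfer of an odd-order class -/
lemma dvd_classNumber_of_ext (F K : Type*) [Field F] [NumberField F] [Field K] [NumberField K]
    [Algebra F K] (t : ℕ) (hc : t.Coprime (Module.finrank F K))
    (c : ClassGroup (𝓞 F)) (hord : orderOf c = t) : t ∣ NumberField.classNumber K := by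
  obtain ⟨I, rfl⟩ := ClassGroup.mk0_surjective c
  have hI0 : (I : Ideal (𝓞 F)) ≠ ⊥ := nonZeroDivisors.coe_ne_zero I
  have hinj : Function.Injective (algebraMap (𝓞 F) (𝓞 K)) :=
    FaithfulSMul.algebraMap_injective _ _
  let J0 : Ideal (𝓞 K) := (I : Ideal (𝓞 F)).map (algebraMap (𝓞 F) (𝓞 K))
  have hJ0 : J0 ∈ nonZeroDivisors (Ideal (𝓞 K)) := by
    rw [mem_nonZeroDivisors_iff_ne_zero]
    intro h
    exact hI0 ((Ideal.map_eq_bot_iff_of_injective hinj).mp h)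
  let J : nonZeroDivisors (Ideal (𝓞 K)) := ⟨J0, hJ0⟩
  have key : ∀ m : ℕ, (ClassGroup.mk0 J) ^ m = 1 → t ∣ m := by
    intro m hm
    have hp : (J0 ^ m).IsPrincipal := by
      rw [← ClassGroup.mk0_eq_one_iff (pow_mem hJ0 m), ← hm, ← map_pow, SubmonoidClass.mk_pow]
    obtain ⟨x, hx⟩ := hp
    have h1 : Ideal.relNorm (𝓞 F) (J0 ^ m) =
        (I : Ideal (𝓞 F)) ^ (Module.finrank F K * m) := by
      rw [map_pow, Ideal.relNorm_algebraMap, ← pow_mul,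
        IsFractionRing.finrank_eq (𝓞 F) F (𝓞 K) K]
    have h2 : ((I : Ideal (𝓞 F)) ^ (Module.finrank F K * m)).IsPrincipal := by
      rw [← h1, hx]
      exact ⟨_, Ideal.relNorm_singleton (𝓞 F) x⟩
    have h3 : (ClassGroup.mk0 I) ^ (Module.finrank F K * m) = 1 := by
      rw [← ClassGroup.mk0_eq_one_iff (pow_mem I.2 _)] at h2
      rw [← h2, ← map_pow]
      rfl
    have h4 := orderOf_dvd_of_pow_eq_one h3
    rw [hord] at h4
    exact hc.dvd_of_dvd_mul_left h4
  have := key (orderOf (ClassGroup.mk0 J)) (pow_orderOf_eq_one _)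
  refine this.trans ?_
  unfold NumberField.classNumber
  exact orderOf_dvd_card

lemma unit_pow_zsqrtd (d : ℤ) (hd : d < 0) (a b : ℤ√d) (h : a * b = 1) : a ^ 4 = 1 := by
  have h1 : a.norm * b.norm = 1 := by rw [← Zsqrtd.norm_mul, h, Zsqrtd.norm_one]
  have h0 := Zsqrtd.norm_nonneg hd.le a
  have h2 : a.norm = 1 := by
    rcases Int.eq_one_or_neg_one_of_mul_eq_one h1 with h | h <;> omega
  rw [Zsqrtd.norm_def] at h2
  have hre : a.re * a.re ≤ 1 := by nlinarith [mul_self_nonneg a.im]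
  have him : a.im * a.im ≤ 1 := by nlinarith [mul_self_nonneg a.re, mul_self_nonneg a.im]
  have e1 : a.re = 0 ∨ a.re = 1 ∨ a.re = -1 := by
    have : -1 ≤ a.re := by nlinarith
    have : a.re ≤ 1 := by nlinarith
    omega
  have e2 : a.im = 0 ∨ a.im = 1 ∨ a.im = -1 := by
    have : -1 ≤ a.im := by nlinarith
    have : a.im ≤ 1 := by nlinarith
    omega
  have e3 : a ^ 4 = a * a * (a * a) := by ring
  rw [e3]
  rcases e1 with e1 | e1 | e1 <;> rcases e2 with e2 | e2 | e2 <;> rw [e1, e2] at h2 <;>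
    ring_nf at h2 <;> (try omega) <;> ext <;> simp [e1, e2] <;> (try (rw [show d = -1 from by omega])) <;> (try norm_num)

lemma rat_int_of_sq_mul (d : ℤ) (hd : Squarefree d) (x : ℚ) (k : ℤ) (h : x ^ 2 * d = k) :
    ∃ n : ℤ, x = n := by
  have hden : (x.den : ℤ) * x.den ∣ d := by
    have h1 : x.num ^ 2 * d = k * (x.den * x.den) := by
      have h0 : (x.den : ℚ) ≠ 0 := by exact_mod_cast x.den_nz
      have h2 : x = x.num / x.den := (Rat.num_div_den x).symm
      rw [h2] at h
      field_simp at h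
      have h3 : ((x.num : ℚ)) ^ 2 * d = k * (x.den * x.den) := by rw [← pow_two]; linarith
      exact_mod_cast h3
    have hcop : IsCoprime ((x.den : ℤ) * x.den) (x.num ^ 2) := by
      have : IsCoprime (x.den : ℤ) x.num := by
        rw [Int.isCoprime_iff_gcd_eq_one, Int.gcd_comm]
        exact x.reduced
      exact (this.mul_left this).pow_right
    exact hcop.dvd_of_dvd_mul_left (h1 ▸ dvd_mul_left _ _)
  have := hd _ hden
  have h1 : x.den = 1 := by
    have := Int.isUnit_iff.mp this
    omega
  exact ⟨x.num, by rw [← Rat.num_div_den x, h1]; simp⟩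

/-- ring of integers of `F = ℚ(δ)`, `δ² = d ≡ 3 mod 4`. -/
lemma integer_form (F : Type*) [Field F] [NumberField F] (d : ℤ) (hd : d < 0) (hd4 : d % 4 = 3)
    (hsf : Squarefree d) (δ : F) (hδ : δ ^ 2 = d) (hspan : ∀ x : F, ∃ a b : ℚ, x = a + b * δ)
    (x : F) (hx : IsIntegral ℤ x) : ∃ a b : ℤ, x = a + b * δ := by
  obtain ⟨a, b, rfl⟩ := hspan x
  let ι : F →+* ℂ := Classical.choice (inferInstance : Nonempty (F →+* ℂ))
  have hι : (ι δ) ^ 2 = d := by rw [← map_pow, hδ]; simp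
  have hconj : (starRingEnd ℂ) (ι δ) = - ι δ := by
    have hre : (ι δ).re = 0 := by
      have h1 := congrArg Complex.re hι
      have h2 := congrArg Complex.im hι
      simp [pow_two] at h1 h2
      have h2' : (ι δ).re * (ι δ).im = 0 := by linarith
      rcases mul_eq_zero.mp h2' with h | h
      · exact h
      · rw [h] at h1
        have : (d : ℝ) < 0 := by exact_mod_cast hd
        nlinarith [mul_self_nonneg (ι δ).re]
    apply Complex.ext <;> simp [hre]
  have i1 : IsIntegral ℤ (ι (a + b * δ)) := hx.map ι.toIntAlgHom
  have i2 : IsIntegral ℤ ((starRingEnd ℂ) (ι (a + b * δ))) := i1.map (starRingEnd ℂ).toIntAlgHom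
  have desc : ∀ r : ℚ, IsIntegral ℤ (r : ℂ) → ∃ n : ℤ, r = n := by
    intro r hr
    have : IsIntegral ℤ (algebraMap ℚ ℂ r) := by simpa using hr
    rw [isIntegral_algebraMap_iff (algebraMap ℚ ℂ).injective] at this
    obtain ⟨n, hn⟩ := IsIntegrallyClosed.isIntegral_iff.mp this
    exact ⟨n, by simpa using hn.symm⟩
  obtain ⟨A, hA⟩ := desc (2 * a) (by
    have e : ((2 * a : ℚ) : ℂ) = ι (a + b * δ) + (starRingEnd ℂ) (ι (a + b * δ)) := by
      simp [hconj]; ring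
    rw [e]; exact i1.add i2)
  obtain ⟨B, hB⟩ := desc (a ^ 2 - b ^ 2 * d) (by
    have e : ((a ^ 2 - b ^ 2 * d : ℚ) : ℂ) =
        ι (a + b * δ) * (starRingEnd ℂ) (ι (a + b * δ)) := by
      simp [hconj]
      linear_combination (b : ℂ) ^ 2 * hι
    rw [e]; exact i1.mul i2)
  obtain ⟨C, hC⟩ := rat_int_of_sq_mul d hsf (2 * b) (A ^ 2 - 4 * B) (by
    push_cast; rw [← hA, ← hB]; ring)
  have hAC : A ^ 2 - C ^ 2 * d = 4 * B := by
    have : (A : ℚ) ^ 2 - C ^ 2 * d = 4 * B := by rw [← hA, ← hB, ← hC]; ring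
    exact_mod_cast this
  obtain ⟨e, he⟩ : ∃ e, d = 4 * e + 3 := ⟨d / 4, by omega⟩
  have hev : Even A ∧ Even C := by
    have : (A ^ 2 + C ^ 2) % 4 = 0 := by
      have : A ^ 2 + C ^ 2 = 4 * (B + C ^ 2 * (e + 1)) := by rw [he] at hAC; linarith
      omega
    rcases Int.even_or_odd' A with ⟨k, rfl | rfl⟩ <;> rcases Int.even_or_odd' C with ⟨l, rfl | rfl⟩
    · simp
    all_goals ring_nf at this; omega
  obtain ⟨⟨A', rfl⟩, ⟨C', rfl⟩⟩ := hev
  refine ⟨A', C', ?_⟩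
  have ha : a = A' := by push_cast at hA; linarith
  have hb : b = C' := by push_cast at hC; linarith
  rw [ha, hb]; simp

lemma exists_class_core (F : Type*) [Field F] [NumberField F] (t q f : ℕ) (d : ℤ) (ht3 : 3 ≤ t)
    (htodd : Odd t) (hqp : q.Prime) (hq : q % 4 = 1) (hd : d < 0) (hd4 : d % 4 = 3)
    (hsf : Squarefree d) (hf : d * (f : ℤ) ^ 2 = 1 - 2 * (q : ℤ) ^ t)
    (δ : F) (hδ : δ ^ 2 = d) (hspan : ∀ x : F, ∃ a b : ℚ, x = a + b * δ) :
    ∃ c : ClassGroup (𝓞 F), orderOf c = t := by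
  have hint := integer_form F d hd hd4 hsf δ hδ hspan
  have hδint : IsIntegral ℤ δ := IsIntegral.of_pow (n := 2) (by norm_num) (by
    rw [hδ]; exact isIntegral_algebraMap (R := ℤ) (x := d))
  have hinj : Function.Injective (algebraMap (𝓞 F) F) := FaithfulSMul.algebraMap_injective _ _
  obtain ⟨δI, hδI0⟩ : ∃ x : 𝓞 F, algebraMap (𝓞 F) F x = δ := ⟨⟨δ, hδint⟩, rfl⟩
  have hδI : δI * δI = (d : 𝓞 F) := by
    apply hinj
    rw [map_mul, map_intCast, ← hδ, pow_two, hδI0]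
  let φ : ℤ√d →+* 𝓞 F := Zsqrtd.lift ⟨δI, hδI⟩
  have hφ : ∀ z : ℤ√d, algebraMap (𝓞 F) F (φ z) = z.re + z.im * δ := by
    intro z
    show algebraMap (𝓞 F) F (z.re + z.im * δI) = _
    rw [map_add, map_mul, map_intCast, map_intCast, hδI0]
  have hφi : Function.Injective φ := Zsqrtd.lift_injective _ (fun n hn => by
    nlinarith [mul_self_nonneg n])
  have hφs : Function.Surjective φ := by
    intro x
    obtain ⟨a, b, hab⟩ := hint x x.2
    refine ⟨⟨a, b⟩, ?_⟩
    apply hinj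
    rw [hφ]; exact hab.symm
  set Q : ℤ := (q : ℤ) ^ t with hQ
  have hQodd : Odd Q := by
    apply Odd.pow
    exact ⟨(q : ℤ) / 2, by omega⟩
  have hα : (⟨1 - Q, f⟩ : ℤ√d) * ⟨1 - Q, -f⟩ = ((Q ^ 2 : ℤ) : ℤ√d) := by
    ext
    · rw [Zsqrtd.re_mul, Zsqrtd.re_intCast]; simp only; linear_combination -hf
    · rw [Zsqrtd.im_mul, Zsqrtd.im_intCast]; simp only; ring
  have hαs : (⟨1 - Q, f⟩ : ℤ√d) + ⟨1 - Q, -f⟩ = ((2 * (1 - Q) : ℤ) : ℤ√d) := by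
    ext
    · rw [Zsqrtd.re_add, Zsqrtd.re_intCast]; simp only; ring
    · rw [Zsqrtd.im_add, Zsqrtd.im_intCast]; simp only; ring
  set α : ℤ√d := ⟨1 - Q, f⟩ with hαdef
  set α' : ℤ√d := ⟨1 - Q, -f⟩ with hαdef'
  have hcop : IsCoprime α α' := by
    have h1 : IsCoprime (2 * (1 - Q)) (Q ^ 2) := by
      apply IsCoprime.pow_right
      apply IsCoprime.mul_left
      · exact Int.isCoprime_two_left.mpr hQodd
      · exact ⟨1, 1, by ring⟩
    obtain ⟨r, s, hrs⟩ := h1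
    refine ⟨r, r + s * α, ?_⟩
    have : ((r * (2 * (1 - Q)) + s * Q ^ 2 : ℤ) : ℤ√d) = 1 := by rw [hrs]; simp
    rw [Int.cast_add, Int.cast_mul, Int.cast_mul s, ← hα, ← hαs] at this
    linear_combination this
  have hα0 : φ α ≠ 0 := by
    intro h
    rw [← map_zero φ] at h
    have h := congrArg Zsqrtd.im (hφi h)
    have h : (f : ℤ) = 0 := h
    rw [h] at hf
    have : Q = 0 ∨ Q ≠ 0 := em _
    omega
  obtain ⟨A, hA⟩ : ∃ A : Ideal (𝓞 F), Ideal.span {φ α} = A ^ t := by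
    let inst : GCDMonoid (Ideal (𝓞 F)) := UniqueFactorizationMonoid.toGCDMonoid _
    apply exists_eq_pow_of_mul_eq_pow_of_coprime (b := Ideal.span {φ α'})
      (c := Ideal.span {((q ^ 2 : ℤ) : 𝓞 F)})
    · rw [Ideal.isCoprime_span_singleton_iff]
      exact hcop.map φ
    · rw [Ideal.span_singleton_mul_span_singleton, ← map_mul, hα, Ideal.span_singleton_pow,
        map_intCast, hQ]
      congr 2
      push_cast; ring
  have hA0 : A ∈ nonZeroDivisors (Ideal (𝓞 F)) := by
    rw [mem_nonZeroDivisors_iff_ne_zero]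
    rintro rfl
    rw [zero_pow (by omega)] at hA
    exact hα0 (Ideal.span_singleton_eq_bot.mp hA)
  refine ⟨ClassGroup.mk0 ⟨A, hA0⟩, ?_⟩
  apply orderOf_eq_of_pow_and_pow_div_prime (by omega)
  · rw [← map_pow, SubmonoidClass.mk_pow, ClassGroup.mk0_eq_one_iff, ← hA]
    exact ⟨_, rfl⟩
  intro p hp hpt hone
  obtain ⟨s, rfl⟩ := hpt
  rw [Nat.mul_div_cancel_left _ hp.pos, ← map_pow, SubmonoidClass.mk_pow,
    ClassGroup.mk0_eq_one_iff] at hone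
  obtain ⟨β, hβ⟩ := hone
  have hβ : A ^ s = Ideal.span {β} := hβ
  obtain ⟨m, rfl⟩ : Odd p := (Nat.odd_mul.mp htodd).1
  have hm : 1 ≤ m := by
    have := hp.two_le
    omega
  have hs : 1 ≤ s := Nat.pos_of_ne_zero (by rintro rfl; simp at ht3)
  rw [mul_comm, pow_mul, hβ, Ideal.span_singleton_pow, Ideal.span_singleton_eq_span_singleton] at hA
  obtain ⟨u, hu⟩ := hA.symm
  have hu4 : u ^ 4 = 1 := by
    obtain ⟨a, ha⟩ := hφs u
    obtain ⟨b, hb⟩ := hφs ((u⁻¹ : (𝓞 F)ˣ) : 𝓞 F)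
    have h1 := unit_pow_zsqrtd d hd a b (hφi (by rw [map_mul, ha, hb, map_one, Units.mul_inv]))
    apply Units.ext
    rw [Units.val_pow_eq_pow_val, ← ha, ← map_pow, h1]; simp
  have hup : (u ^ (2 * m + 1)) ^ (2 * m + 1) = u := by
    rw [← pow_mul]
    have : (2 * m + 1) * (2 * m + 1) = 4 * (m * m + m) + 1 := by ring
    rw [this, pow_succ, pow_mul, hu4]; simp
  set β' : 𝓞 F := β * ((u ^ (2 * m + 1) : (𝓞 F)ˣ) : 𝓞 F) with hβ'
  have hαβ : φ α = β' ^ (2 * m + 1) := by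
    rw [hβ', mul_pow, ← Units.val_pow_eq_pow_val, hup, hu]
  have hβ0 : algebraMap (𝓞 F) F β' ≠ 0 := by
    intro h
    apply hα0
    have : β' = 0 := hinj (by rw [map_zero]; exact h)
    rw [hαβ, this, zero_pow (by omega)]
  have hαF : (1 - Q + f * δ : F) = algebraMap (𝓞 F) F β' ^ (2 * m + 1) := by
    rw [← map_pow, ← hαβ, hφ]; simp [hαdef]
  let γ : F := (1 + f * δ) / algebraMap (𝓞 F) F β' ^ m
  have hfF : (d : F) * (f : F) ^ 2 = 1 - 2 * (Q : F) := by exact_mod_cast congrArg (Int.cast (R := F)) hf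
  have hγ2 : γ ^ 2 = 2 * algebraMap (𝓞 F) F β' := by
    have h1 : (1 + f * δ) ^ 2 = 2 * algebraMap (𝓞 F) F β' ^ (2 * m + 1) := by
      rw [← hαF]; linear_combination (f : F) ^ 2 * hδ + hfF
    simp only [γ]
    rw [div_pow, h1]
    field_simp
    ring
  have hγint : IsIntegral ℤ γ := IsIntegral.of_pow (n := 2) (by norm_num) (by
    rw [hγ2]
    have h2 : IsIntegral ℤ (2 : F) := by
      simpa using isIntegral_algebraMap (R := ℤ) (A := F) (x := 2)
    exact h2.mul β'.2)
  obtain ⟨γI, hγI⟩ : ∃ x : 𝓞 F, algebraMap (𝓞 F) F x = γ := ⟨⟨γ, hγint⟩, rfl⟩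
  obtain ⟨g, hg⟩ := hφs γI
  refine final_zsqrtd d f q s m hd hq hqp.one_lt hs hm ?_ g ?_
  · rw [hf, hQ, mul_comm s]
  · apply hφi
    apply hinj
    rw [map_pow, hg, map_mul, map_intCast, map_pow, map_mul, hφ, map_intCast,
      hγI, pow_succ, pow_mul, hγ2, mul_pow]
    simp only [γ]
    push_cast
    field_simp

lemma exists_class (F : Type*) [Field F] [NumberField F] (t q : ℕ) (ht3 : 3 ≤ t)
    (htodd : Odd t) (hqp : q.Prime) (hq : q % 4 = 1)
    (θ : F) (hθ : θ ^ 2 = ((1 - 2 * (q : ℤ) ^ t : ℤ) : F))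
    (hspan : ∀ x : F, ∃ a b : ℚ, x = a + b * θ) :
    ∃ c : ClassGroup (𝓞 F), orderOf c = t := by
  have hpos : 1 ≤ q ^ t := Nat.one_le_pow _ _ hqp.pos
  obtain ⟨a0, f, ha0, hf0, hab, hsf⟩ := Nat.sq_mul_squarefree_of_pos (n := 2 * q ^ t - 1) (by omega)
  have hf : (-(a0 : ℤ)) * (f : ℤ) ^ 2 = 1 - 2 * (q : ℤ) ^ t := by
    zify [show 1 ≤ 2 * q ^ t by omega] at hab
    linarith
  have hfF : (-(a0 : F)) * (f : F) ^ 2 = ((1 - 2 * (q : ℤ) ^ t : ℤ) : F) := by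
    rw [← hf]; push_cast; rfl
  have hf0' : (f : F) ≠ 0 := by exact_mod_cast hf0.ne'
  have hq4 : (q : ℤ) ^ t % 4 = 1 := by
    have : (q : ℤ) ^ t ≡ 1 ^ t [ZMOD 4] := Int.ModEq.pow _ (by
      show (q : ℤ) % 4 = 1 % 4
      omega)
    rwa [one_pow] at this
  refine exists_class_core F t q f (-a0) ht3 htodd hqp hq (by omega) ?_ ?_ hf (θ / f) ?_ ?_
  · generalize (q : ℤ) ^ t = Q at *
    generalize -(a0 : ℤ) = d at *
    rcases Int.even_or_odd' (f : ℤ) with ⟨k, hk | hk⟩ <;> rw [hk] at hf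
    · have : 4 * (d * k ^ 2) = 1 - 2 * Q := by linarith
      omega
    · have : 4 * (d * (k ^ 2 + k)) + d = 1 - 2 * Q := by linarith
      omega
  · rw [← Int.squarefree_natAbs]
    simpa using hsf
  · rw [div_pow, hθ, ← hfF]; field_simp; push_cast; rfl
  · intro x
    obtain ⟨a, b, rfl⟩ := hspan x
    exact ⟨a, b * f, by push_cast; field_simp⟩

lemma not_rat_sq (n : ℕ) (hn : Squarefree n) (h1 : n ≠ 1) (c : ℚ) (hc : c ^ 2 = n) : False := by
  have : IsSquare (n : ℚ) := ⟨c, by rw [← hc, pow_two]⟩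
  rw [Rat.isSquare_natCast_iff] at this
  obtain ⟨x, rfl⟩ := this
  have := hn x dvd_rfl
  rw [Nat.isUnit_iff] at this
  subst this
  exact h1 rfl

lemma mem_Qsqrt (d : ℤ) (x : ℂ) (hx : x ∈ Qsqrt d) : ∃ a b : ℚ, x = a + b * sqrtC d := by
  have hx' : x ∈ Algebra.adjoin ℚ {sqrtC d} := by
    rw [← IntermediateField.adjoin_simple_toSubalgebra_of_isAlgebraic
      (isIntegral_sqrtC d).isAlgebraic]
    exact hx
  clear hx
  induction hx' using Algebra.adjoin_induction with
  | mem x h => exact ⟨0, 1, by rw [Set.mem_singleton_iff.mp h]; simp⟩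
  | algebraMap r => exact ⟨r, 0, by simp⟩
  | add x y hx hy h1 h2 =>
    obtain ⟨a, b, rfl⟩ := h1
    obtain ⟨a', b', rfl⟩ := h2
    exact ⟨a + a', b + b', by push_cast; ring⟩
  | mul x y hx hy h1 h2 =>
    obtain ⟨a, b, rfl⟩ := h1
    obtain ⟨a', b', rfl⟩ := h2
    refine ⟨a * a' + b * b' * d, a * b' + a' * b, ?_⟩
    push_cast
    linear_combination (b * b' : ℂ) * sqrtC_sq d

lemma sqrt_indep (q r : ℕ) (hq : q.Prime) (hr : r.Prime) (hne : q ≠ r)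
    (h : sqrtC r ∈ Qsqrt q) : False := by
  obtain ⟨a, b, hab⟩ := mem_Qsqrt _ _ h
  have h1 := sqrtC_sq r
  have h2 := sqrtC_sq q
  rw [hab] at h1
  push_cast at h1 h2
  have h3 : (2 * a * b : ℂ) * sqrtC q = r - a ^ 2 - b ^ 2 * q := by
    linear_combination h1 - (b : ℂ) ^ 2 * h2
  by_cases h0 : 2 * a * b = 0
  · have h0' : (2 * a * b : ℂ) = 0 := by exact_mod_cast h0
    rw [h0', zero_mul] at h3
    have h4 : (r : ℚ) - a ^ 2 - b ^ 2 * q = 0 := by exact_mod_cast h3.symm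
    have : a = 0 ∨ b = 0 := by simpa using h0
    rcases this with rfl | rfl
    · refine not_rat_sq (r * q) ?_ ?_ (b * q) ?_
      · exact (Nat.squarefree_mul ((Nat.coprime_primes hr hq).mpr hne.symm)).mpr
          ⟨hr.squarefree, hq.squarefree⟩
      · intro h
        exact hr.one_lt.ne' (Nat.eq_one_of_mul_eq_one_right h)
      · push_cast; linear_combination -(q : ℚ) * h4
    · exact not_rat_sq r hr.squarefree hr.one_lt.ne' a (by linear_combination -h4)
  · have h0' : (2 * a * b : ℂ) ≠ 0 := by exact_mod_cast h0
    refine not_rat_sq q hq.squarefree hq.one_lt.ne' ((r - a ^ 2 - b ^ 2 * q) / (2 * a * b)) ?_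
    have h5 : sqrtC q = (r - a ^ 2 - b ^ 2 * q) / (2 * a * b) := by
      rw [eq_div_iff h0', mul_comm, h3]
    rw [h5] at h2
    exact_mod_cast h2

lemma finite_primes (K : IntermediateField ℚ ℂ) [FiniteDimensional ℚ K] :
    {q : ℕ | q.Prime ∧ sqrtC q ∈ K}.Finite := by
  have hfin : Finite (@IntermediateField ℚ K _ _ K.algebra') :=
    @Field.finite_intermediateField_of_exists_primitive_element ℚ K _ _ K.algebra' inferInstance
      (@Field.exists_primitive_element ℚ K _ _ K.algebra' inferInstance inferInstance)
  refine Set.Finite.of_finite_image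
    (f := fun q : ℕ => (Qsqrt q).comap K.val) (Set.toFinite _) ?_
  rintro q ⟨hq, hqK⟩ r ⟨hr, hrK⟩ h
  by_contra hne
  apply sqrt_indep q r hq hr hne
  have h1 : (⟨sqrtC r, hrK⟩ : K) ∈ (Qsqrt r).comap K.val := by
    show sqrtC r ∈ Qsqrt r
    exact IntermediateField.mem_adjoin_simple_self ℚ _
  have h : (Qsqrt q).comap K.val = (Qsqrt r).comap K.val := h
  rw [← h] at h1
  exact h1

lemma finrank_Qsqrt_le (d : ℤ) : Module.finrank ℚ (Qsqrt d) ≤ 2 := by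
  rw [Qsqrt, IntermediateField.adjoin.finrank (isIntegral_sqrtC d)]
  have h1 : (X ^ 2 - C (d : ℚ)).Monic := monic_X_pow_sub_C _ two_ne_zero
  have := minpoly.min ℚ (sqrtC d) h1 (by simp [sqrtC_sq])
  have := natDegree_le_natDegree this
  rwa [natDegree_X_pow_sub_C] at this

lemma finrank_Qsqrt (d : ℤ) (hd : d < 0) : Module.finrank ℚ (Qsqrt d) = 2 := by
  have h1 := finrank_Qsqrt_le d
  have h2 : 0 < Module.finrank ℚ (Qsqrt d) := Module.finrank_pos
  have h3 : Module.finrank ℚ (Qsqrt d) ≠ 1 := by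
    intro h
    rw [Qsqrt, IntermediateField.finrank_adjoin_simple_eq_one_iff,
      IntermediateField.mem_bot] at h
    obtain ⟨c, hc⟩ := h
    have h := sqrtC_sq d
    rw [← hc] at h
    have h' : c ^ 2 = d := by
      have : (c : ℂ) ^ 2 = d := h
      exact_mod_cast this
    have : (d : ℚ) < 0 := by exact_mod_cast hd
    nlinarith [sq_nonneg c]
  omega

lemma finrank_Qsqrt2_le (d e : ℤ) : Module.finrank ℚ (Qsqrt2 d e) ≤ 4 := by
  have h : Qsqrt2 d e = Qsqrt d ⊔ Qsqrt e := by
    rw [Qsqrt2, Qsqrt, Qsqrt, ← IntermediateField.adjoin_union]; rfl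
  rw [h]
  refine (IntermediateField.finrank_sup_le _ _).trans ?_
  exact Nat.mul_le_mul (finrank_Qsqrt_le d) (finrank_Qsqrt_le e)

lemma first_part (t : ℕ) (ht3 : 3 ≤ t) (htodd : Odd t) (q : ℕ) (hqp : q.Prime) (hq : q % 4 = 1) :
    t ∣ NumberField.classNumber (Qsqrt2 (1 - 2 * (q : ℤ) ^ t) (q : ℤ)) := by
  have hD : (1 - 2 * (q : ℤ) ^ t) < 0 := by
    have : 0 < (q : ℤ) ^ t := pow_pos (by exact_mod_cast hqp.pos) _
    omega
  set D : ℤ := 1 - 2 * (q : ℤ) ^ t with hDdef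
  have hle : Qsqrt D ≤ Qsqrt2 D q :=
    IntermediateField.adjoin.mono _ _ _ (by simp)
  let _ : Algebra (Qsqrt D) (Qsqrt2 D q) := (IntermediateField.inclusion hle).toRingHom.toAlgebra
  have _ : IsScalarTower ℚ (Qsqrt D) (Qsqrt2 D q) := IsScalarTower.of_algebraMap_eq fun x => rfl
  have hfr := Module.finrank_mul_finrank ℚ (Qsqrt D) (Qsqrt2 D q)
  rw [finrank_Qsqrt D hD] at hfr
  have h4 := finrank_Qsqrt2_le D q
  have hpos : 0 < Module.finrank ℚ (Qsqrt2 D q) := Module.finrank_pos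
  have hcop : t.Coprime (Module.finrank (Qsqrt D) (Qsqrt2 D q)) := by
    have : Module.finrank (Qsqrt D) (Qsqrt2 D q) = 1 ∨
        Module.finrank (Qsqrt D) (Qsqrt2 D q) = 2 := by omega
    rcases this with h | h <;> rw [h]
    · simp
    · exact htodd.coprime_two_right
  have hmem : sqrtC D ∈ Qsqrt D := IntermediateField.mem_adjoin_simple_self ℚ _
  obtain ⟨c, hc⟩ := exists_class (Qsqrt D) t q ht3 htodd hqp hq ⟨sqrtC D, hmem⟩
    (by
      apply Subtype.ext
      have := sqrtC_sq D
      rw [hDdef] at this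
      push_cast at this ⊢
      exact this)
    (by
      rintro ⟨x, hx⟩
      obtain ⟨a, b, rfl⟩ := mem_Qsqrt D x hx
      exact ⟨a, b, by apply Subtype.ext; simp⟩)
  exact dvd_classNumber_of_ext (Qsqrt D) (Qsqrt2 D q) t hcop c hc

/-- For an odd square-free integer `t ≥ 3`, for every prime `q ≡ 1 (mod 4)` the integer `t`
divides the class number of the imaginary bi-quadratic field `ℚ(√(1 - 2 q ^ t), √q)`, and the
collection of such bi-quadratic fields is infinite. -/
theorem t_dvd_classNumber_biquadratic
    (t : ℕ) (ht3 : 3 ≤ t) (htodd : Odd t) (htsf : Squarefree t) :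
    (∀ q : ℕ, q.Prime → q % 4 = 1 →
      t ∣ NumberField.classNumber (Qsqrt2 (1 - 2 * (q : ℤ) ^ t) (q : ℤ))) ∧
    {K : IntermediateField ℚ ℂ | ∃ q : ℕ, q.Prime ∧ q % 4 = 1 ∧
      K = Qsqrt2 (1 - 2 * (q : ℤ) ^ t) (q : ℤ)}.Infinite := by

  refine ⟨fun q hqp hq => first_part t ht3 htodd q hqp hq, ?_⟩
  intro hfin
  have hinf : {q : ℕ | q.Prime ∧ q ≡ 1 [MOD 4]}.Infinite :=
    Nat.infinite_setOfPred_prime_modEq_one (by norm_num)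
  apply hinf
  refine Set.Finite.subset (Set.Finite.biUnion hfin
    (t := fun K => {q : ℕ | q.Prime ∧ q % 4 = 1 ∧ K = Qsqrt2 (1 - 2 * (q : ℤ) ^ t) (q : ℤ)}) ?_) ?_
  · rintro K ⟨q₀, -, -, rfl⟩
    refine (finite_primes (Qsqrt2 (1 - 2 * (q₀ : ℤ) ^ t) (q₀ : ℤ))).subset ?_
    rintro q ⟨hq, -, h⟩
    refine ⟨hq, ?_⟩
    rw [h]
    exact IntermediateField.subset_adjoin _ _ (by simp)
  · rintro q ⟨hq, hq4⟩
    have hq4 : q % 4 = 1 := hq4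
    simp only [Set.mem_iUnion]
    exact ⟨_, ⟨q, hq, hq4, rfl⟩, hq, hq4, rfl⟩
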